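/- For the family of line arrangements B_d (d ≥ 7) defined below, one has r(B_d) = d − 3 for all d ≥ 7. -/

import Mathlib

open Classical MvPolynomial

variable {K : Type*} [Field K] [CharZero K] {ℓ : ℕ}

/-- A (central) hyperplane arrangement: a finite set of nonzero linear forms,
pairwise non-proportional. -/
def IsArrangement (A : Finset (MvPolynomial (Fin ℓ) K)) : Prop :=
  (∀ α ∈ A, α ≠ 0 ∧ α.IsHomogeneous 1) ∧
    ∀ α ∈ A, ∀ β ∈ A, α ≠ β → ∀ c : K, α ≠ c • β

/-- The arrangement is essential: the common zero set of its forms is `{0}`. -/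
def IsEssential (A : Finset (MvPolynomial (Fin ℓ) K)) : Prop :=
  ∀ v : Fin ℓ → K, (∀ α ∈ A, eval v α = 0) → v = 0

/-- The defining polynomial `Q(A)`. -/
noncomputable def Qpoly (A : Finset (MvPolynomial (Fin ℓ) K)) : MvPolynomial (Fin ℓ) K :=
  ∏ α ∈ A, α

/-- Apply a derivation `θ = Σ θ_j ∂_j` to a polynomial. -/
noncomputable def applyDer (θ : Fin ℓ → MvPolynomial (Fin ℓ) K)
    (f : MvPolynomial (Fin ℓ) K) : MvPolynomial (Fin ℓ) K :=
  ∑ j, θ j * pderiv j f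

/-- The minimal degree of a Jacobian relation `r(A)`. -/
noncomputable def mdr (A : Finset (MvPolynomial (Fin ℓ) K)) : ℕ :=
  sInf {r | ∃ θ : Fin ℓ → MvPolynomial (Fin ℓ) K, θ ≠ 0 ∧
    (∀ j, (θ j).IsHomogeneous r) ∧ applyDer θ (Qpoly A) = 0}

/-- The number of elements `|A^H|` of the restriction of `A` to `H`:
the number of distinct subspaces `H ∩ ker α_L`, `L ∈ A \ {H}`. -/
noncomputable def restCard (A : Finset (MvPolynomial (Fin ℓ) K))
    (H : MvPolynomial (Fin ℓ) K) : ℕ :=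
  ((A.erase H).image fun L => {v : Fin ℓ → K | eval v H = 0 ∧ eval v L = 0}).card

/-- The linear form `a·x + b·y − z` in `ℚ[x,y,z]`. -/
noncomputable def lineL (a b : ℚ) : MvPolynomial (Fin 3) ℚ :=
  C a * X 0 + C b * X 1 - X 2

/-- The arrangement `B_{2p}` of `2p` lines with defining polynomial
`x·y·∏_{j=1}^{p−1} (x/2^j + y/3^j − z)(x/2^j + y/3^{j+1} − z)`. -/
noncomputable def baseB (p : ℕ) : Finset (MvPolynomial (Fin 3) ℚ) :=
  {X 0, X 1} ∪
    (Finset.Icc 1 (p - 1)).image (fun j => lineL (1 / 2 ^ j) (1 / 3 ^ j)) ∪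
    (Finset.Icc 1 (p - 1)).image (fun j => lineL (1 / 2 ^ j) (1 / 3 ^ (j + 1)))

/-- The family `B_d`, `d ≥ 7`: `B_{2p} = baseB p`, and
`B_{2p+1} = B_{2p} ∪ {x/2^p + y/3^p − z}`. -/
noncomputable def Bfam (d : ℕ) : Finset (MvPolynomial (Fin 3) ℚ) :=
  if d % 2 = 0 then baseB (d / 2)
  else insert (lineL (1 / 2 ^ (d / 2)) (1 / 3 ^ (d / 2))) (baseB (d / 2))


namespace BfamProof

abbrev S := MvPolynomial (Fin 3) ℚ

/-- If `φ` is congruent to the identity mod `L` on variables, it is on all polynomials. -/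
lemma dvd_sub_of_vars (L : S) (φ : S →ₐ[ℚ] S) (h : ∀ i, L ∣ X i - φ (X i)) (p : S) :
    L ∣ p - φ p := by
  induction p using MvPolynomial.induction_on with
  | C a =>
    have : φ (C a) = C a := φ.commutes a
    rw [this, sub_self]; exact dvd_zero _
  | add p q hp hq =>
    have : p + q - φ (p + q) = (p - φ p) + (q - φ q) := by rw [map_add]; ring
    rw [this]; exact dvd_add hp hq
  | mul_X p i hp =>
    have : p * X i - φ (p * X i) = (p - φ p) * X i + φ p * (X i - φ (X i)) := by
      rw [map_mul]; ring
    rw [this]; exact dvd_add (Dvd.dvd.mul_right hp _) (Dvd.dvd.mul_left (h i) _)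

/-- `φ` is a retraction with kernel generated by `L`. -/
structure Retr (L : S) (φ : S →ₐ[ℚ] S) : Prop where
  zero : φ L = 0
  vars : ∀ i, L ∣ X i - φ (X i)
  ne : L ≠ 0

lemma Retr.dvd_iff {L : S} {φ : S →ₐ[ℚ] S} (h : Retr L φ) (p : S) : L ∣ p ↔ φ p = 0 := by
  constructor
  · rintro ⟨q, rfl⟩
    rw [map_mul, h.zero, zero_mul]
  · intro hp
    have := dvd_sub_of_vars L φ h.vars p
    rwa [hp, sub_zero] at this

lemma Retr.prime {L : S} {φ : S →ₐ[ℚ] S} (h : Retr L φ) : Prime L := by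
  refine ⟨h.ne, ?_, ?_⟩
  · intro hu
    have := hu.map φ
    rw [h.zero] at this
    exact not_isUnit_zero this
  · intro a b hab
    rw [h.dvd_iff, map_mul, mul_eq_zero] at hab
    rwa [h.dvd_iff, h.dvd_iff]

noncomputable def phiL (a b : ℚ) : S →ₐ[ℚ] S := aeval ![X 0, X 1, C a * X 0 + C b * X 1]
noncomputable def phiX : S →ₐ[ℚ] S := aeval ![0, X 1, X 2]
noncomputable def phiY : S →ₐ[ℚ] S := aeval ![X 0, 0, X 2]

lemma lineL_eval (a b : ℚ) (v : Fin 3 → ℚ) : eval v (lineL a b) = a * v 0 + b * v 1 - v 2 := by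
  simp [lineL]

lemma lineL_ne (a b : ℚ) : lineL a b ≠ 0 := by
  intro h
  have := lineL_eval a b ![0, 0, 1]
  rw [h] at this
  simp at this

lemma retrL (a b : ℚ) : Retr (lineL a b) (phiL a b) := by
  refine ⟨?_, ?_, lineL_ne a b⟩
  · simp [lineL, phiL, algHom_C]
  · intro i
    fin_cases i
    · simp [phiL]
    · simp [phiL]
    · refine ⟨-1, ?_⟩
      simp [phiL, lineL]

lemma retrX : Retr (X 0) phiX := by
  refine ⟨by simp [phiX], ?_, X_ne_zero 0⟩
  intro i
  fin_cases i <;> simp [phiX]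

lemma retrY : Retr (X 1) phiY := by
  refine ⟨by simp [phiY], ?_, X_ne_zero 1⟩
  intro i
  fin_cases i <;> simp [phiY]

lemma lineL_hom (a b : ℚ) : (lineL a b).IsHomogeneous 1 := by
  unfold lineL
  exact ((isHomogeneous_C_mul_X a 0).add (isHomogeneous_C_mul_X b 1)).sub (isHomogeneous_X _ 2)

lemma hcomp_mul (H q : S) (hH : H.IsHomogeneous 1) (k : ℕ) :
    homogeneousComponent (k + 1) (H * q) = H * homogeneousComponent k q := by
  conv_lhs => rw [← sum_homogeneousComponent q, Finset.mul_sum, map_sum]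
  have h1 : ∀ i ∈ Finset.range (q.totalDegree + 1),
      homogeneousComponent (k + 1) (H * homogeneousComponent i q) =
        if i = k then H * homogeneousComponent k q else 0 := by
    intro i _
    have : (H * homogeneousComponent i q).IsHomogeneous (1 + i) :=
      hH.mul (homogeneousComponent_isHomogeneous i q)
    rw [homogeneousComponent_of_mem this]
    by_cases hik : i = k
    · subst hik; simp [add_comm]
    · rw [if_neg (by omega), if_neg hik]
  rw [Finset.sum_congr rfl h1, Finset.sum_ite_eq']
  split_ifs with h
  · rfl
  · rw [homogeneousComponent_eq_zero, mul_zero]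
    simp at h; omega

lemma exists_quot {H u : S} (hH : H.IsHomogeneous 1) {k : ℕ} (hu : u.IsHomogeneous (k + 1))
    (hd : H ∣ u) : ∃ q : S, q.IsHomogeneous k ∧ u = H * q := by
  obtain ⟨q, rfl⟩ := hd
  refine ⟨homogeneousComponent k q, homogeneousComponent_isHomogeneous k q, ?_⟩
  rw [← hcomp_mul H q hH, homogeneousComponent_eq_self hu]

def ea (m : ℕ) : ℕ := m / 2 + 1
def eb (m : ℕ) : ℕ := (m + 1) / 2 + 1
def ca (m : ℕ) : ℚ := 1 / 2 ^ ea m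
def cb (m : ℕ) : ℚ := 1 / 3 ^ eb m
noncomputable def Ln (m : ℕ) : S := lineL (ca m) (cb m)

lemma ca_inj {i j : ℕ} : ca i = ca j ↔ ea i = ea j := by
  unfold ca
  constructor
  · intro h
    have h2 : (2 : ℚ) ^ ea i = 2 ^ ea j := by simpa using h
    exact pow_right_injective₀ (by norm_num) (by norm_num) h2
  · intro h; rw [h]

lemma cb_inj {i j : ℕ} : cb i = cb j ↔ eb i = eb j := by
  unfold cb
  constructor
  · intro h
    have h2 : (3 : ℚ) ^ eb i = 3 ^ eb j := by simpa using h
    exact pow_right_injective₀ (by norm_num) (by norm_num) h2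
  · intro h; rw [h]

lemma two_three (u : ℕ) (hu : 2 ≤ u) : 2 * ((2 : ℚ) ^ u - 1) < 3 ^ u - 1 := by
  induction u, hu using Nat.le_induction with
  | base => norm_num
  | succ n hn ih =>
    have : (1 : ℚ) ≤ 2 ^ n := one_le_pow₀ (by norm_num)
    rw [pow_succ, pow_succ]; linarith

lemma two_three' (u : ℕ) (hu : 4 ≤ u) : 2 * ((2 : ℚ) ^ (u + 1) - 1) < 3 ^ u - 1 := by
  induction u, hu using Nat.le_induction with
  | base => norm_num
  | succ n hn ih =>
    have : (1 : ℚ) ≤ 2 ^ (n + 1) := one_le_pow₀ (by norm_num)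
    rw [pow_succ, pow_succ 3]; linarith

lemma inv_pow_cases2 (v : ℕ) (hv : 1 ≤ v) :
    (1 / 2 ^ v : ℚ) = 1 / 2 ∨ (1 / 2 ^ v : ℚ) = 1 / 4 ∨ (1 / 2 ^ v : ℚ) ≤ 1 / 8 := by
  rcases (by omega : v = 1 ∨ v = 2 ∨ 3 ≤ v) with h | h | h
  · subst h; norm_num
  · subst h; norm_num
  · right; right
    have : (2 : ℚ) ^ 3 ≤ 2 ^ v := pow_le_pow_right₀ (by norm_num) h
    exact one_div_le_one_div_of_le (by norm_num) (by linarith)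

lemma inv_pow_cases3 (v : ℕ) (hv : 1 ≤ v) :
    (1 / 3 ^ v : ℚ) = 1 / 3 ∨ (1 / 3 ^ v : ℚ) ≤ 1 / 9 := by
  rcases (by omega : v = 1 ∨ 2 ≤ v) with h | h
  · subst h; norm_num
  · right
    have : (3 : ℚ) ^ 2 ≤ 3 ^ v := pow_le_pow_right₀ (by norm_num) h
    exact one_div_le_one_div_of_le (by norm_num) (by linarith)

/-- The key exponential Diophantine fact. -/
lemma key (u u' v v' : ℕ) (hv : 1 ≤ v) (hv' : 1 ≤ v') (h0 : 1 ≤ u + u') (h1 : u ≤ u' + 1)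
    (h2 : u' ≤ u + 1) :
    ((2 : ℚ) ^ u - 1) * (1 - 1 / 3 ^ v') ≠ (1 - 1 / 2 ^ v) * (3 ^ u' - 1) := by
  have hV0 : (0 : ℚ) < 1 / 2 ^ v := by positivity
  have hT0 : (0 : ℚ) < 1 / 3 ^ v' := by positivity
  have hV := inv_pow_cases2 v hv
  have hT := inv_pow_cases3 v' hv'
  generalize (1 / 2 ^ v : ℚ) = V at *
  generalize (1 / 3 ^ v' : ℚ) = T at *
  have hV1 : V ≤ 1 / 2 := by rcases hV with h | h | h <;> linarith
  have hT1 : T ≤ 1 / 3 := by rcases hT with h | h <;> linarith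
  intro h
  have big : 2 * ((2 : ℚ) ^ u - 1) < 3 ^ u' - 1 → False := by
    intro hb
    have h2u : (0 : ℚ) ≤ 2 ^ u - 1 := by
      have : (1 : ℚ) ≤ 2 ^ u := one_le_pow₀ (by norm_num)
      linarith
    nlinarith
  rcases (by omega : (u = 0 ∧ u' = 1) ∨ (u = 1 ∧ u' = 0) ∨ (u = 1 ∧ u' = 1) ∨ (u = 1 ∧ u' = 2) ∨
    (u = 2 ∧ u' = 1) ∨ (u = 3 ∧ u' = 2) ∨ (u = 4 ∧ u' = 3) ∨ (2 ≤ u ∧ u ≤ u') ∨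
    (4 ≤ u' ∧ u = u' + 1)) with ⟨rfl, rfl⟩ | ⟨rfl, rfl⟩ | ⟨rfl, rfl⟩ | ⟨rfl, rfl⟩ | ⟨rfl, rfl⟩ |
      ⟨rfl, rfl⟩ | ⟨rfl, rfl⟩ | ⟨hu, huu⟩ | ⟨hu, rfl⟩
  · norm_num at h; linarith
  · norm_num at h; linarith
  · norm_num at h; linarith
  · norm_num at h; linarith
  · norm_num at h; linarith
  · norm_num at h
    rcases hV with hV | hV | hV <;> rcases hT with hT | hT <;> linarith
  · norm_num at h
    rcases hV with hV | hV | hV <;> rcases hT with hT | hT <;> linarith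
  · apply big
    have := two_three u hu
    have h3 : (3 : ℚ) ^ u ≤ 3 ^ u' := pow_le_pow_right₀ (by norm_num) huu
    linarith
  · exact big (two_three' u' hu)

lemma noncollinear (i j M : ℕ) (hij : i < j) (hjM : j + 2 ≤ M) :
    (ca i - ca M) * (cb j - cb M) ≠ (ca j - ca M) * (cb i - cb M) := by
  intro h
  obtain ⟨u, hu⟩ : ∃ u, ea j = ea i + u := ⟨ea j - ea i, by unfold ea; omega⟩
  obtain ⟨u', hu'⟩ : ∃ u, eb j = eb i + u := ⟨eb j - eb i, by unfold eb; omega⟩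
  obtain ⟨v, hv⟩ : ∃ u, ea M = ea j + u := ⟨ea M - ea j, by unfold ea; omega⟩
  obtain ⟨v', hv'⟩ : ∃ u, eb M = eb j + u := ⟨eb M - eb j, by unfold eb; omega⟩
  apply key u u' v v'
  · unfold ea at *; omega
  · unfold eb at *; omega
  · unfold ea eb at *; omega
  · unfold ea eb at *; omega
  · unfold ea eb at *; omega
  unfold ca cb at h
  rw [hv, hv', hu, hu'] at h
  simp only [pow_add] at h
  field_simp at h ⊢
  linarith

/-- The dehomogenised point parameter. -/
noncomputable def tt (M i : ℕ) : ℚ := -(cb i - cb M) / (ca i - ca M)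

lemma tt_ne {M i : ℕ} (h : i + 2 ≤ M) : tt M i ≠ 0 := by
  have h1 : ca i ≠ ca M := by rw [Ne, ca_inj]; unfold ea; omega
  have h2 : cb i ≠ cb M := by rw [Ne, cb_inj]; unfold eb; omega
  unfold tt
  exact div_ne_zero (neg_ne_zero.mpr (sub_ne_zero.mpr h2)) (sub_ne_zero.mpr h1)

lemma tt_inj {M i j : ℕ} (hi : i + 2 ≤ M) (hj : j + 2 ≤ M) (h : tt M i = tt M j) : i = j := by
  have h1 : ca i - ca M ≠ 0 := sub_ne_zero.mpr (by rw [Ne, ca_inj]; unfold ea; omega)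
  have h2 : ca j - ca M ≠ 0 := sub_ne_zero.mpr (by rw [Ne, ca_inj]; unfold ea; omega)
  unfold tt at h
  rw [div_eq_div_iff h1 h2] at h
  rcases lt_trichotomy i j with hl | hl | hl
  · exact absurd (by linarith) (noncollinear i j M hl hj)
  · exact hl
  · exact absurd (by linarith) (noncollinear j i M hl hi)

lemma Ln_eval (m : ℕ) (v : Fin 3 → ℚ) : eval v (Ln m) = ca m * v 0 + cb m * v 1 - v 2 :=
  lineL_eval _ _ _

lemma Ln_not_dvd {i j : ℕ} (h : i ≠ j) : ¬ Ln i ∣ Ln j := by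
  rintro ⟨q, hq⟩
  have e1 : ∀ v : Fin 3 → ℚ, eval v (Ln j) = eval v (Ln i) * eval v q := by
    intro v; rw [hq, map_mul]
  have h1 := e1 ![1, 0, ca i]
  have h2 := e1 ![0, 1, cb i]
  simp [Ln_eval] at h1 h2
  have h3 := ca_inj.mp (sub_eq_zero.mp h1)
  have h4 := cb_inj.mp (sub_eq_zero.mp h2)
  unfold ea at h3; unfold eb at h4
  omega

lemma Ln_prime (i : ℕ) : Prime (Ln i) := (retrL _ _).prime
lemma Ln_hom (i : ℕ) : (Ln i).IsHomogeneous 1 := lineL_hom _ _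

/-- A homogeneous polynomial of degree `k` on the line `Ln M` with enough zeros vanishes. -/
lemma dvd_of_zeros (u : S) (k M : ℕ) (hM : M = k + 2) (hu : u.IsHomogeneous k)
    (hz : ∀ i, i ≤ k → eval ![tt M i, 1, ca M * tt M i + cb M] u = 0) : Ln M ∣ u := by
  set P : Polynomial ℚ :=
    aeval ![Polynomial.X, 1, Polynomial.C (ca M) * Polynomial.X + Polynomial.C (cb M)] u with hP
  have hev : ∀ t : ℚ, P.eval t = eval ![t, 1, ca M * t + cb M] u := by
    intro t
    rw [hP, ← Polynomial.coe_evalRingHom, aeval_def, eval₂_eq', eval_eq', map_sum]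
    apply Finset.sum_congr rfl
    intro d _
    simp [Fin.prod_univ_three]
  have hdeg : P.natDegree ≤ k := by
    rw [hP, aeval_def, eval₂_eq']
    apply Polynomial.natDegree_sum_le_of_forall_le
    intro d hd
    have hdk : d 0 + d 1 + d 2 = k := by
      have := hu.degree_eq_sum_deg_support hd
      exact (this.trans ((Finsupp.degree_eq_sum d).trans (Fin.sum_univ_three _))).symm
    simp only [Fin.prod_univ_three]
    have e0 : (Polynomial.X ^ d 0 : Polynomial ℚ).natDegree ≤ d 0 := by simp
    have e2 : ((Polynomial.C (ca M) * Polynomial.X + Polynomial.C (cb M)) ^ d 2 :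
        Polynomial ℚ).natDegree ≤ d 2 := by
      refine Polynomial.natDegree_pow_le.trans ?_
      have := Polynomial.natDegree_linear_le (a := ca M) (b := cb M)
      nlinarith
    refine (Polynomial.natDegree_C_mul_le _ _).trans ?_
    refine Polynomial.natDegree_mul_le.trans ?_
    simp only [Matrix.cons_val_zero, Matrix.cons_val_one, Matrix.cons_val, one_pow, mul_one]
    omega
  have hP0 : P = 0 := by
    refine Polynomial.eq_zero_of_natDegree_lt_card_of_eval_eq_zero (ι := Fin (k + 1)) P
      (f := fun i => tt M i) ?_ ?_ ?_
    · intro i j hij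
      exact Fin.ext (tt_inj (by omega) (by omega) hij)
    · intro i
      rw [hev]; exact hz i (by omega)
    · simp; omega
  have hL : phiL (ca M) (cb M) u * X 1 = 0 := by
    apply MvPolynomial.funext
    intro w
    rw [map_mul, map_zero, eval_X]
    by_cases hw : w 1 = 0
    · rw [hw, mul_zero]
    have h1 : eval w (phiL (ca M) (cb M) u) = eval ![w 0, w 1, ca M * w 0 + cb M * w 1] u := by
      rw [phiL, aeval_def, eval₂_eq', eval_eq' _ u, map_sum]
      apply Finset.sum_congr rfl
      intro d _
      simp [Fin.prod_univ_three]
    have h2 : eval ![w 0, w 1, ca M * w 0 + cb M * w 1] u =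
        w 1 ^ k * eval ![w 0 / w 1, 1, ca M * (w 0 / w 1) + cb M] u := by
      rw [eval_eq', eval_eq', Finset.mul_sum]
      apply Finset.sum_congr rfl
      intro d hd
      have hdk : k = d 0 + d 1 + d 2 := by
        have := hu.degree_eq_sum_deg_support hd
        exact this.trans ((Finsupp.degree_eq_sum d).trans (Fin.sum_univ_three _))
      have e0 : w 0 = w 1 * (w 0 / w 1) := by field_simp
      have e2 : ca M * w 0 + cb M * w 1 = w 1 * (ca M * (w 0 / w 1) + cb M) := by field_simp
      simp only [Fin.prod_univ_three, Matrix.cons_val_zero, Matrix.cons_val_one, Matrix.cons_val]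
      rw [e2, hdk, pow_add, pow_add, mul_pow, one_pow]
      nth_rewrite 1 [e0]
      rw [mul_pow]; ring
    rw [h1, h2, ← hev, hP0]; simp
  rw [Ln, (retrL _ _).dvd_iff]
  rcases mul_eq_zero.mp hL with h | h
  · exact h
  · exact absurd h (X_ne_zero 1)


lemma step (k : ℕ) (u w : S) (hu : u.IsHomogeneous k)
    (h : ∀ i, i < k + 3 → Ln i ∣ C (ca i) * X 0 * u - w) : Ln (k + 2) ∣ u ∧ Ln (k + 2) ∣ w := by
  have hdu : Ln (k + 2) ∣ u := by
    refine dvd_of_zeros u k (k + 2) rfl hu ?_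
    intro i hi
    set M := k + 2 with hM
    have hne : ca i - ca M ≠ 0 := sub_ne_zero.mpr (by rw [Ne, ca_inj]; unfold ea; omega)
    have ht : tt M i ≠ 0 := tt_ne (by omega)
    have hti : (ca i - ca M) * tt M i = -(cb i - cb M) := by
      unfold tt; field_simp
    obtain ⟨p, hp⟩ := h i (by omega)
    obtain ⟨q, hq⟩ := h M (by omega)
    have hp' := congrArg (eval ![tt M i, 1, ca M * tt M i + cb M]) hp
    have hq' := congrArg (eval ![tt M i, 1, ca M * tt M i + cb M]) hq
    simp only [map_sub, map_mul, eval_C, eval_X, Ln_eval, Matrix.cons_val_zero,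
      Matrix.cons_val_one, Matrix.cons_val] at hp' hq'
    have z1 : ca i * tt M i + cb i * 1 - (ca M * tt M i + cb M) = 0 := by linarith
    have z2 : ca M * tt M i + cb M * 1 - (ca M * tt M i + cb M) = 0 := by ring
    rw [z1, zero_mul] at hp'
    rw [z2, zero_mul] at hq'
    have : ((ca i - ca M) * tt M i) * eval ![tt M i, 1, ca M * tt M i + cb M] u = 0 := by
      linarith
    exact (mul_eq_zero.mp this).resolve_left (mul_ne_zero hne ht)
  refine ⟨hdu, ?_⟩
  have h1 := h (k + 2) (by omega)
  exact (dvd_sub_right (Dvd.dvd.mul_left hdu _)).mp h1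

lemma eq_zero_of_hom_zero {u : S} {i : ℕ} (hu : u.IsHomogeneous 0) (h : Ln i ∣ u) : u = 0 := by
  rw [← totalDegree_zero_iff_isHomogeneous, totalDegree_eq_zero_iff_eq_C] at hu
  rw [hu] at h ⊢
  obtain ⟨q, hq⟩ := h
  have := congrArg (eval ![1, 0, ca i]) hq
  rw [map_mul, Ln_eval, eval_C] at this
  simp at this
  rw [this, C_0]

/-- The core vanishing statement. -/
lemma core (k : ℕ) : ∀ u w : S, u.IsHomogeneous k → w.IsHomogeneous (k + 1) →
    (∀ i, i < k + 3 → Ln i ∣ C (ca i) * X 0 * u - w) → u = 0 ∧ w = 0 := by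
  induction k with
  | zero =>
    intro u w hu hw h
    obtain ⟨hdu, hdw⟩ := step 0 u w hu h
    have hu0 := eq_zero_of_hom_zero hu hdu
    obtain ⟨w', hw', rfl⟩ := exists_quot (Ln_hom _) hw hdw
    refine ⟨hu0, ?_⟩
    have h0 := h 0 (by omega)
    rw [hu0, mul_zero, zero_sub, dvd_neg] at h0
    have h1 := ((Ln_prime 0).dvd_mul.mp h0).resolve_left (Ln_not_dvd (by omega))
    rw [eq_zero_of_hom_zero hw' h1, mul_zero]
  | succ k ih =>
    intro u w hu hw h
    obtain ⟨hdu, hdw⟩ := step (k + 1) u w hu h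
    obtain ⟨w', hw', rfl⟩ := exists_quot (Ln_hom _) hw hdw
    obtain ⟨u', hu', rfl⟩ := exists_quot (Ln_hom _) hu hdu
    obtain ⟨h1, h2⟩ := ih u' w' hu' hw' (by
      intro i hi
      have h0 := h i (by omega)
      have e : C (ca i) * X 0 * (Ln (k + 1 + 2) * u') - Ln (k + 1 + 2) * w' =
        Ln (k + 1 + 2) * (C (ca i) * X 0 * u' - w') := by ring
      rw [e] at h0
      exact ((Ln_prime i).dvd_mul.mp h0).resolve_left (Ln_not_dvd (by omega)))
    rw [h1, h2]; simp

noncomputable def Arr (m : ℕ) : Finset S :=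
  insert (X 0) (insert (X 1) ((Finset.range m).image Ln))

lemma Ln_even (n : ℕ) : Ln (2 * n) = lineL (1 / 2 ^ (n + 1)) (1 / 3 ^ (n + 1)) := by
  have h1 : ea (2 * n) = n + 1 := by unfold ea; omega
  have h2 : eb (2 * n) = n + 1 := by unfold eb; omega
  rw [Ln, ca, cb, h1, h2]

lemma Ln_odd (n : ℕ) : Ln (2 * n + 1) = lineL (1 / 2 ^ (n + 1)) (1 / 3 ^ (n + 1 + 1)) := by
  have h1 : ea (2 * n + 1) = n + 1 := by unfold ea; omega
  have h2 : eb (2 * n + 1) = n + 1 + 1 := by unfold eb; omega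
  rw [Ln, ca, cb, h1, h2]

lemma baseB_eq (p : ℕ) : baseB p = Arr (2 * (p - 1)) := by
  ext α
  simp only [baseB, Arr, Finset.mem_union, Finset.mem_insert, Finset.mem_singleton,
    Finset.mem_image, Finset.mem_Icc, Finset.mem_range]
  constructor
  · rintro ((h | ⟨j, ⟨hj, hj'⟩, rfl⟩) | ⟨j, ⟨hj, hj'⟩, rfl⟩)
    · tauto
    · obtain ⟨n, rfl⟩ : ∃ n, j = n + 1 := ⟨j - 1, by omega⟩
      exact Or.inr (Or.inr ⟨2 * n, by omega, Ln_even n⟩)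
    · obtain ⟨n, rfl⟩ : ∃ n, j = n + 1 := ⟨j - 1, by omega⟩
      exact Or.inr (Or.inr ⟨2 * n + 1, by omega, Ln_odd n⟩)
  · rintro (h | h | ⟨i, hi, rfl⟩)
    · tauto
    · tauto
    · rcases Nat.even_or_odd' i with ⟨n, rfl | rfl⟩
      · exact Or.inl (Or.inr ⟨n + 1, by omega, (Ln_even n).symm⟩)
      · exact Or.inr ⟨n + 1, by omega, (Ln_odd n).symm⟩

lemma Arr_succ (m : ℕ) : Arr (m + 1) = insert (Ln m) (Arr m) := by
  ext α
  simp only [Arr, Finset.range_add_one, Finset.image_insert, Finset.mem_insert]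
  tauto

lemma Bfam_eq (d : ℕ) (hd : 7 ≤ d) : Bfam d = Arr (d - 2) := by
  unfold Bfam
  split_ifs with h
  · rw [baseB_eq]; congr 1; omega
  · have e : d - 2 = 2 * (d / 2 - 1) + 1 := by omega
    rw [baseB_eq, e, Arr_succ, Ln_even]
    have e2 : d / 2 - 1 + 1 = d / 2 := by omega
    rw [e2]

lemma X0_not_dvd_X1 : ¬ (X 0 : S) ∣ X 1 := by
  rintro ⟨q, hq⟩
  have := congrArg (eval ![0, 1, 0]) hq
  simp at this

lemma X1_not_dvd_X0 : ¬ (X 1 : S) ∣ X 0 := by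
  rintro ⟨q, hq⟩
  have := congrArg (eval ![1, 0, 0]) hq
  simp at this

lemma X0_not_dvd_Ln (i : ℕ) : ¬ (X 0 : S) ∣ Ln i := by
  rintro ⟨q, hq⟩
  have := congrArg (eval ![0, 0, 1]) hq
  rw [Ln_eval] at this
  simp at this

lemma X1_not_dvd_Ln (i : ℕ) : ¬ (X 1 : S) ∣ Ln i := by
  rintro ⟨q, hq⟩
  have := congrArg (eval ![0, 0, 1]) hq
  rw [Ln_eval] at this
  simp at this

lemma Ln_not_dvd_X0 (i : ℕ) : ¬ Ln i ∣ X 0 := by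
  rintro ⟨q, hq⟩
  have := congrArg (eval ![1, 0, ca i]) hq
  rw [map_mul, Ln_eval] at this
  simp at this

lemma Ln_not_dvd_X1 (i : ℕ) : ¬ Ln i ∣ X 1 := by
  rintro ⟨q, hq⟩
  have := congrArg (eval ![0, 1, cb i]) hq
  rw [map_mul, Ln_eval] at this
  simp at this

lemma Arr_prime {m : ℕ} {α : S} (h : α ∈ Arr m) : Prime α := by
  simp only [Arr, Finset.mem_insert, Finset.mem_image] at h
  rcases h with rfl | rfl | ⟨i, _, rfl⟩
  · exact retrX.prime
  · exact retrY.prime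
  · exact Ln_prime i

lemma Arr_not_dvd {m : ℕ} {α β : S} (hα : α ∈ Arr m) (hβ : β ∈ Arr m) (hne : α ≠ β) :
    ¬ α ∣ β := by
  simp only [Arr, Finset.mem_insert, Finset.mem_image] at hα hβ
  rcases hα with rfl | rfl | ⟨i, _, rfl⟩ <;> rcases hβ with rfl | rfl | ⟨j, _, rfl⟩
  · exact absurd rfl hne
  · exact X0_not_dvd_X1
  · exact X0_not_dvd_Ln j
  · exact X1_not_dvd_X0
  · exact absurd rfl hne
  · exact X1_not_dvd_Ln j
  · exact Ln_not_dvd_X0 i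
  · exact Ln_not_dvd_X1 i
  · exact Ln_not_dvd (fun h => hne (by rw [h]))

lemma Qpoly_Arr (m : ℕ) : Qpoly (Arr m) = X 0 * (X 1 * ∏ i ∈ Finset.range m, Ln i) := by
  unfold Qpoly Arr
  rw [Finset.prod_insert, Finset.prod_insert, Finset.prod_image]
  · intro i _ j _ hij
    by_contra hne
    exact Ln_not_dvd hne (hij ▸ dvd_refl _)
  · simp only [Finset.mem_image, not_exists, not_and]
    intro i _ h
    exact Ln_not_dvd_X1 i (h ▸ dvd_refl _)
  · simp only [Finset.mem_insert, Finset.mem_image, not_or, not_exists, not_and]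
    refine ⟨fun h => X0_not_dvd_X1 (h ▸ dvd_refl _), ?_⟩
    intro i _ h
    exact Ln_not_dvd_X0 i (h ▸ dvd_refl _)

lemma Qpoly_hom (m : ℕ) : (Qpoly (Arr m)).IsHomogeneous (m + 2) := by
  rw [Qpoly_Arr]
  have h := IsHomogeneous.prod (Finset.range m) Ln (fun _ => 1) (fun i _ => Ln_hom i)
  have := (isHomogeneous_X ℚ (0 : Fin 3)).mul ((isHomogeneous_X ℚ (1 : Fin 3)).mul h)
  have e : m + 2 = 1 + (1 + ∑ _i ∈ Finset.range m, 1) := by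
    rw [Finset.sum_const, Finset.card_range, smul_eq_mul]; omega
  rw [e]; exact this

lemma Qpoly_ne (m : ℕ) : Qpoly (Arr m) ≠ 0 := by
  exact Finset.prod_ne_zero_iff.mpr fun α hα => (Arr_prime hα).ne_zero

lemma applyDer_mul (θ : Fin 3 → S) (f g : S) :
    applyDer θ (f * g) = applyDer θ f * g + f * applyDer θ g := by
  simp only [applyDer, Fin.sum_univ_three, Derivation.leibniz, smul_eq_mul]
  ring

lemma applyDer_X (θ : Fin 3 → S) (j : Fin 3) : applyDer θ (X j) = θ j := by
  simp only [applyDer, Fin.sum_univ_three]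
  fin_cases j <;> simp [pderiv_X]

lemma applyDer_Ln (θ : Fin 3 → S) (i : ℕ) :
    applyDer θ (Ln i) = C (ca i) * θ 0 + C (cb i) * θ 1 - θ 2 := by
  simp only [applyDer, Fin.sum_univ_three, Ln, lineL]
  simp [pderiv_X]
  ring

lemma dvd_applyDer {m : ℕ} {θ : Fin 3 → S} (h : applyDer θ (Qpoly (Arr m)) = 0) {α : S}
    (hα : α ∈ Arr m) : α ∣ applyDer θ α := by
  have e : Qpoly (Arr m) = α * ∏ β ∈ (Arr m).erase α, β := (Finset.mul_prod_erase _ _ hα).symm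
  rw [e, applyDer_mul] at h
  have h1 : α ∣ applyDer θ α * ∏ β ∈ (Arr m).erase α, β := by
    rw [eq_neg_of_add_eq_zero_left h]
    exact (dvd_mul_right _ _).neg_right
  refine ((Arr_prime hα).dvd_mul.mp h1).resolve_right ?_
  intro h2
  obtain ⟨β, hβ, hd⟩ := (Arr_prime hα).exists_mem_finset_dvd h2
  rw [Finset.mem_erase] at hβ
  exact Arr_not_dvd hα hβ.2 (Ne.symm hβ.1) hd

lemma lower_succ (m r : ℕ) (hr : r + 3 ≤ m) (θ : Fin 3 → S)
    (hθ : ∀ j, (θ j).IsHomogeneous (r + 1)) (h : applyDer θ (Qpoly (Arr m)) = 0) : θ = 0 := by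
  have h0 : X 0 ∣ θ 0 := by
    have := dvd_applyDer h (α := X 0) (by simp [Arr])
    rwa [applyDer_X] at this
  have h1 : X 1 ∣ θ 1 := by
    have := dvd_applyDer h (α := X 1) (by simp [Arr])
    rwa [applyDer_X] at this
  obtain ⟨p, hp, hp'⟩ := exists_quot (isHomogeneous_X ℚ 0) (hθ 0) h0
  obtain ⟨q, hq, hq'⟩ := exists_quot (isHomogeneous_X ℚ 1) (hθ 1) h1
  have hw : (θ 2 - X 2 * q).IsHomogeneous (r + 1) := by
    have := (isHomogeneous_X ℚ (2 : Fin 3)).mul hq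
    rw [add_comm] at this
    exact (hθ 2).sub this
  obtain ⟨c1, c2⟩ := core r (p - q) (θ 2 - X 2 * q) (hp.sub hq) hw (by
    intro i hi
    have h2 : Ln i ∣ applyDer θ (Ln i) := dvd_applyDer h (by
      simp only [Arr, Finset.mem_insert, Finset.mem_image, Finset.mem_range]
      exact Or.inr (Or.inr ⟨i, by omega, rfl⟩))
    rw [applyDer_Ln, hp', hq'] at h2
    have e : C (ca i) * X 0 * (p - q) - (θ 2 - X 2 * q) =
        (C (ca i) * (X 0 * p) + C (cb i) * (X 1 * q) - θ 2) - Ln i * q := by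
      unfold Ln lineL; ring
    rw [e]
    exact dvd_sub h2 (dvd_mul_right _ _))
  have e0 : θ 0 = q * X 0 := by rw [hp', sub_eq_zero.mp c1, mul_comm]
  have e1 : θ 1 = q * X 1 := by rw [hq', mul_comm]
  have e2 : θ 2 = q * X 2 := by rw [sub_eq_zero.mp c2, mul_comm]
  have eu := (Qpoly_hom m).sum_X_mul_pderiv
  have hq0 : q * ((m + 2) • Qpoly (Arr m)) = 0 := by
    rw [← eu, ← h, applyDer, Fin.sum_univ_three, Fin.sum_univ_three, e0, e1, e2]
    ring
  have hq1 : q = 0 := by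
    refine (mul_eq_zero.mp hq0).resolve_right ?_
    exact smul_ne_zero (by omega) (Qpoly_ne m)
  funext j
  fin_cases j
  · simp [e0, hq1]
  · simp [e1, hq1]
  · simp [e2, hq1]

lemma lower (m r : ℕ) (hm : 5 ≤ m) (hr : r + 4 ≤ m + 2) (θ : Fin 3 → S)
    (hθ : ∀ j, (θ j).IsHomogeneous r) (h : applyDer θ (Qpoly (Arr m)) = 0) : θ = 0 := by
  rcases r with _ | r
  · have := lower_succ m 0 (by omega) (fun j => θ j * X 0)
      (fun j => by simpa using (hθ j).mul (isHomogeneous_X ℚ (0 : Fin 3))) (by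
        have e : applyDer (fun j => θ j * X 0) (Qpoly (Arr m)) =
            X 0 * applyDer θ (Qpoly (Arr m)) := by
          simp only [applyDer, Fin.sum_univ_three]; ring
        rw [e, h, mul_zero])
    funext j
    have := congrFun this j
    exact (mul_eq_zero.mp this).resolve_right (X_ne_zero 0)
  · exact lower_succ m r (by omega) θ hθ h

lemma upper (n : ℕ) : ∃ θ : Fin 3 → S, θ ≠ 0 ∧ (∀ j, (θ j).IsHomogeneous (n + 1)) ∧
    applyDer θ (Qpoly (Arr (n + 2))) = 0 := by
  set f₂ : S := X 0 * ∏ i ∈ Finset.range n, Ln (i + 1 + 1) with hf₂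
  have hf : Qpoly (Arr (n + 2)) = (X 1 * (Ln 0 * Ln 1)) * f₂ := by
    rw [Qpoly_Arr, Finset.prod_range_succ', Finset.prod_range_succ', hf₂]
    ring
  have hom₂ : f₂.IsHomogeneous (n + 1) := by
    have h := IsHomogeneous.prod (Finset.range n) (fun i => Ln (i + 1 + 1)) (fun _ => 1)
      (fun i _ => Ln_hom _)
    have := (isHomogeneous_X ℚ (0 : Fin 3)).mul h
    convert this using 1
    simp; omega
  have hf₂0 : f₂ ≠ 0 := by
    refine mul_ne_zero (X_ne_zero 0) (Finset.prod_ne_zero_iff.mpr fun i _ => (Ln_prime _).ne_zero)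
  set δ : Fin 3 → S := ![1, 0, C (1 / 2)] with hδ
  set g : S := applyDer δ f₂ with hg
  have homg : g.IsHomogeneous n := by
    rw [hg, applyDer]
    apply IsHomogeneous.sum
    intro j _
    have h1 : (pderiv j f₂).IsHomogeneous n := by simpa using hom₂.pderiv (i := j)
    have h2 : (δ j).IsHomogeneous 0 := by
      fin_cases j
      · exact isHomogeneous_one _ _
      · exact isHomogeneous_zero _ _ _
      · exact isHomogeneous_C _ _
    simpa using h2.mul h1
  have hca0 : ca 0 = 1 / 2 := by norm_num [ca, ea]
  have hca1 : ca 1 = 1 / 2 := by norm_num [ca, ea]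
  have hδf : applyDer δ (Qpoly (Arr (n + 2))) = (X 1 * (Ln 0 * Ln 1)) * g := by
    rw [hf, applyDer_mul, applyDer_mul, applyDer_mul, applyDer_X, applyDer_Ln, applyDer_Ln,
      hca0, hca1]
    simp [hδ, hg]
  set c : S := C (1 / ((n : ℚ) + 4)) with hc
  have hcn : c * ((n + 2 + 2 : ℕ) : S) = 1 := by
    have : ((n + 2 + 2 : ℕ) : S) = C ((n : ℚ) + 4) := by
      push_cast
      rw [C_add, map_natCast, map_ofNat]; ring
    rw [this, hc, ← C_mul, one_div_mul_cancel (by positivity), C_1]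
  refine ⟨fun j => δ j * f₂ - c * g * X j, ?_, ?_, ?_⟩
  · intro h
    have h1 := congrFun h 1
    have h0 := congrFun h 0
    simp [hδ] at h1 h0
    have hc0 : c ≠ 0 := by
      intro h; rw [h] at hcn; simp at hcn
    rcases h1 with h1 | h1
    · exact hc0 h1
    · rw [h1] at h0
      simp at h0
      exact hf₂0 h0
  · intro j
    have h2 : (δ j).IsHomogeneous 0 := by
      fin_cases j
      · exact isHomogeneous_one _ _
      · exact isHomogeneous_zero _ _ _
      · exact isHomogeneous_C _ _
    refine IsHomogeneous.sub (by simpa using h2.mul hom₂) ?_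
    have := ((isHomogeneous_C (Fin 3) (1 / ((n : ℚ) + 4))).mul homg).mul (isHomogeneous_X ℚ j)
    rw [zero_add] at this
    exact this
  · have eu := (Qpoly_hom (n + 2)).sum_X_mul_pderiv
    rw [nsmul_eq_mul] at eu
    have e : applyDer (fun j => δ j * f₂ - c * g * X j) (Qpoly (Arr (n + 2))) =
        f₂ * applyDer δ (Qpoly (Arr (n + 2))) -
          c * g * ∑ j, X j * pderiv j (Qpoly (Arr (n + 2))) := by
      simp only [applyDer, Fin.sum_univ_three]; ring
    rw [e, eu, hδf, hf]
    linear_combination (-(g * (X 1 * (Ln 0 * Ln 1)) * f₂)) * hcn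

end BfamProof

/-- For the family of line arrangements `B_d` (`d ≥ 7`) defined above,
one has `r(B_d) = d − 3` for all `d ≥ 7`. -/
theorem mdr_Bfam (d : ℕ) (hd : 7 ≤ d) : mdr (Bfam d) = d - 3 := by
  rw [BfamProof.Bfam_eq d hd]
  apply IsLeast.csInf_eq
  constructor
  · obtain ⟨θ, h1, h2, h3⟩ := BfamProof.upper (d - 4)
    refine ⟨θ, h1, ?_, ?_⟩
    · have e : d - 3 = d - 4 + 1 := by omega
      rw [e]; exact h2
    · have e : d - 2 = d - 4 + 2 := by omega
      rw [e]; exact h3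
  · rintro r ⟨θ, h1, h2, h3⟩
    by_contra hlt
    exact h1 (BfamProof.lower (d - 2) r (by omega) (by omega) θ h2 h3)
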